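/- Let G be a connected undirected graph on n ≥ 2 vertices with doubled-edge oriented incidence matrix B ∈ ℝ^{n×ℓ}, let r ≥ 1, γ > 0, t₀ ∈ ℝ, and let φ : ℝ → ℝ^{nr} be a differentiable stacked reference signal for which there exist finite constants φ̄ and dφ̄ with ‖(Bᵀ⊗I_r)φ(t)‖_∞ ≤ φ̄ and ‖(Bᵀ⊗I_r)φ'(t)‖_∞ ≤ dφ̄ for all t ≥ t₀. Suppose z : ℝ → ℝ^{nr} and κ₁,…,κ_{rℓ} : ℝ → ℝ are differentiable on [t₀,∞) and, writing x(t) = z(t) + φ(t), y(t) = (Bᵀ⊗I_r)x(t), and K(t) = diag(κ₁(t),…,κ_{rℓ}(t)), satisfy for all t ≥ t₀: z'(t) = −γ z(t) − (B⊗I_r) K(t) sgn(y(t)), κⱼ'(t) = |yⱼ(t)| for each j, and κⱼ(t₀) ≥ 1. Then for every initial condition z(t₀), the average-consensus error x̃(t) = x(t) − ((1/n)1_n1_nᵀ ⊗ I_r) φ(t) converges to 0 as t → ∞. -/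

import Mathlib

open Matrix Kronecker Filter Topology

/-- Doubled-edge oriented incidence matrix of a simple graph: each undirected edge is regarded
as two oppositely oriented directed edges (darts); entry is `1` if the dart enters the vertex,
`-1` if it leaves it, and `0` otherwise. -/
noncomputable def dartIncidence {V : Type*} [Fintype V] [DecidableEq V] (G : SimpleGraph V)
    [DecidableRel G.Adj] : Matrix V G.Dart ℝ :=
  Matrix.of fun v d => if d.snd = v then 1 else if d.fst = v then -1 else 0

/-!
The error `x̃` obeys `x̃' = -γ x̃ + (ψ - J ψ) - B K sgn(Bᵀ x̃)`, where `ψ = γ φ + φ'` and `J`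
averages over the agents; here `Bᵀ x̃ = Bᵀ x` because `Bᵀ J = 0`. A walk between two vertices shows
that on a connected graph the differences of a function are controlled by its differences along
edges; hence the disturbance satisfies `x̃ ⬝ (ψ - J ψ) ≤ C ‖Bᵀ x̃‖₁` for some constant `C`. In the
derivative of the storage function `½ ‖x̃‖² + ½ ∑ⱼ (κⱼ - C)²` the unknown `C` cancels against the
adaptation law, so that this function decreases at rate at least `γ ‖x̃‖²`. The gains are therefore
bounded; being monotone they converge, so `‖x̃‖²` converges as well, and the dissipation leaves `0`
as its only possible limit.
-/

section HalfLine

variable {f f' : ℝ → ℝ} {t₀ : ℝ}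

lemma monotoneOn_Ici_of_hasDerivAt_nonneg (hf : ∀ t ≥ t₀, HasDerivAt f (f' t) t)
    (hf' : ∀ t ≥ t₀, 0 ≤ f' t) : MonotoneOn f (Set.Ici t₀) := by
  refine monotoneOn_of_hasDerivWithinAt_nonneg (f' := f') (convex_Ici t₀)
    (fun t ht => (hf t ht).continuousAt.continuousWithinAt) (fun t ht => ?_) (fun t ht => ?_)
  · exact (hf t (interior_subset ht)).hasDerivWithinAt
  · exact hf' t (interior_subset ht)

lemma sub_le_mul_sub_of_hasDerivAt_le {c : ℝ} (hf : ∀ t ≥ t₀, HasDerivAt f (f' t) t)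
    (hf' : ∀ t ≥ t₀, f' t ≤ c) {t : ℝ} (ht : t₀ ≤ t) : f t - f t₀ ≤ c * (t - t₀) := by
  have hmono : MonotoneOn (fun s => c * s - f s) (Set.Ici t₀) :=
    monotoneOn_Ici_of_hasDerivAt_nonneg (f' := fun s => c - f' s)
      (fun s hs => (((hasDerivAt_id s).const_mul c).congr_deriv (mul_one c)).sub (hf s hs))
      (fun s hs => sub_nonneg.2 (hf' s hs))
  have : c * t₀ - f t₀ ≤ c * t - f t := hmono Set.self_mem_Ici ht ht
  linarith

lemma exists_tendsto_atTop_of_hasDerivAt_nonneg {b : ℝ} (hf : ∀ t ≥ t₀, HasDerivAt f (f' t) t)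
    (hf' : ∀ t ≥ t₀, 0 ≤ f' t) (hb : ∀ t ≥ t₀, f t ≤ b) : ∃ l, Tendsto f atTop (𝓝 l) := by
  have hmono : Monotone fun t => f (max t t₀) := fun s t hst =>
    monotoneOn_Ici_of_hasDerivAt_nonneg hf hf' (le_max_right s t₀) (le_max_right t t₀)
      (max_le_max_right t₀ hst)
  have hbdd : BddAbove (Set.range fun t => f (max t t₀)) :=
    ⟨b, Set.forall_mem_range.2 fun t => hb _ (le_max_right t t₀)⟩
  refine ⟨_, (tendsto_atTop_ciSup hmono hbdd).congr' ?_⟩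
  filter_upwards [eventually_ge_atTop t₀] with t ht
  rw [max_eq_left ht]

lemma nonpos_of_tendsto_of_hasDerivAt_le_neg {g : ℝ → ℝ} {b l : ℝ}
    (hf : ∀ t ≥ t₀, HasDerivAt f (f' t) t) (hf' : ∀ t ≥ t₀, f' t ≤ -g t)
    (hb : ∀ t ≥ t₀, b ≤ f t) (hg : Tendsto g atTop (𝓝 l)) : l ≤ 0 := by
  by_contra! hl
  have hg_large : ∀ᶠ T in atTop, ∀ t ≥ T, l / 2 < g t :=
    eventually_forall_ge_atTop.2 (hg.eventually_const_lt (half_lt_self hl))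
  obtain ⟨T, hT, hgT⟩ := ((eventually_ge_atTop t₀).and hg_large).exists
  have hlinear : ∀ t ≥ T, b ≤ f T + -(l / 2) * (t - T) := fun t ht => by
    have := sub_le_mul_sub_of_hasDerivAt_le (c := -(l / 2)) (fun s hs => hf s (hT.trans hs))
      (fun s hs => (hf' s (hT.trans hs)).trans (neg_le_neg (hgT s hs).le)) ht
    linarith [hb t (hT.trans ht)]
  have hbot : Tendsto (fun t => f T + -(l / 2) * (t - T)) atTop atBot :=
    tendsto_const_nhds.add_atBot
      ((tendsto_atTop_add_const_right _ (-T) tendsto_id).const_mul_atTop_of_neg (by linarith))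
  obtain ⟨t, ht, hlt⟩ := ((eventually_ge_atTop T).and (hbot.eventually_lt_atBot b)).exists
  exact (hlinear t ht).not_gt hlt

end HalfLine

section AdaptiveGains

variable {ι : Type*} [Fintype ι] {κ a : ι → ℝ → ℝ} {U U' : ℝ → ℝ} {t₀ α C : ℝ}

/-- The storage function of a system of energy `U` with adaptive gains `κ`: the energy plus half the
squared distance of the gains to a constant reference gain `C`, which the adaptation law need not
know. -/
noncomputable def adaptiveStorage (U : ℝ → ℝ) (κ : ι → ℝ → ℝ) (C t : ℝ) : ℝ :=
  U t + ∑ j, (κ j t - C) ^ 2 / 2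

lemma hasDerivAt_adaptiveStorage {u t : ℝ} {k : ι → ℝ} (hU : HasDerivAt U u t)
    (hκ : ∀ j, HasDerivAt (κ j) (k j) t) :
    HasDerivAt (adaptiveStorage U κ C) (u + ∑ j, (κ j t - C) * k j) t := by
  refine hU.add (HasDerivAt.fun_sum fun j _ => ?_)
  refine ((((hκ j).sub_const C).pow 2).div_const 2).congr_deriv ?_
  rw [Nat.cast_ofNat, Nat.add_one_sub_one, pow_one]
  ring

lemma le_adaptiveStorage (t : ℝ) : U t ≤ adaptiveStorage U κ C t :=
  le_add_of_nonneg_right (Finset.sum_nonneg fun _ _ => by positivity)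

lemma gain_le_add_sqrt_adaptiveStorage {t : ℝ} (hU : 0 ≤ U t) (j : ι) :
    κ j t ≤ C + √(2 * adaptiveStorage U κ C t) := by
  have hsingle : (κ j t - C) ^ 2 / 2 ≤ ∑ i, (κ i t - C) ^ 2 / 2 :=
    Finset.single_le_sum (f := fun i => (κ i t - C) ^ 2 / 2) (fun _ _ => by positivity)
      (Finset.mem_univ j)
  have hsq : (κ j t - C) ^ 2 ≤ 2 * adaptiveStorage U κ C t := by
    unfold adaptiveStorage
    linarith
  linarith [(abs_le.1 (Real.abs_le_sqrt hsq)).2]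

lemma exists_tendsto_gain_of_adaptiveStorage_le {b : ℝ} {j : ι} (hU : ∀ t ≥ t₀, 0 ≤ U t)
    (hκ : ∀ t ≥ t₀, HasDerivAt (κ j) (a j t) t) (ha : ∀ t ≥ t₀, 0 ≤ a j t)
    (hb : ∀ t ≥ t₀, adaptiveStorage U κ C t ≤ b) : ∃ k, Tendsto (κ j) atTop (𝓝 k) :=
  exists_tendsto_atTop_of_hasDerivAt_nonneg (b := C + √(2 * b)) hκ ha fun t ht =>
    (gain_le_add_sqrt_adaptiveStorage (hU t ht) j).trans (by gcongr; exact hb t ht)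

theorem tendsto_zero_of_adaptive_dissipation (hα : 0 < α)
    (hU_nonneg : ∀ t ≥ t₀, 0 ≤ U t) (ha : ∀ j, ∀ t ≥ t₀, 0 ≤ a j t)
    (hU : ∀ t ≥ t₀, HasDerivAt U (U' t) t)
    (hκ : ∀ j, ∀ t ≥ t₀, HasDerivAt (κ j) (a j t) t)
    (hU' : ∀ t ≥ t₀, U' t ≤ -α * U t + ∑ j, (C - κ j t) * a j t) :
    Tendsto U atTop (𝓝 0) := by
  set W := adaptiveStorage U κ C
  have hW : ∀ t ≥ t₀, HasDerivAt W (U' t + ∑ j, (κ j t - C) * a j t) t := fun t ht =>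
    hasDerivAt_adaptiveStorage (hU t ht) fun j => hκ j t ht
  have hdissipation : ∀ t ≥ t₀, U' t + ∑ j, (κ j t - C) * a j t ≤ -(α * U t) := fun t ht => by
    have hcancel : ∑ j, (C - κ j t) * a j t + ∑ j, (κ j t - C) * a j t = 0 := by
      rw [← Finset.sum_add_distrib]
      exact Finset.sum_eq_zero fun j _ => by ring
    linarith [hU' t ht]
  have hW'_nonpos : ∀ t ≥ t₀, U' t + ∑ j, (κ j t - C) * a j t ≤ 0 := fun t ht =>
    (hdissipation t ht).trans (neg_nonpos.2 (mul_nonneg hα.le (hU_nonneg t ht)))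
  have hW_nonneg : ∀ t ≥ t₀, 0 ≤ W t := fun t ht => (hU_nonneg t ht).trans (le_adaptiveStorage t)
  obtain ⟨w, hw⟩ : ∃ w, Tendsto (-W) atTop (𝓝 w) :=
    exists_tendsto_atTop_of_hasDerivAt_nonneg (fun t ht => (hW t ht).neg)
      (fun t ht => neg_nonneg.2 (hW'_nonpos t ht)) (fun t ht => neg_nonpos.2 (hW_nonneg t ht))
  have hW_le : ∀ t ≥ t₀, W t ≤ W t₀ := fun t ht => by
    linarith [sub_le_mul_sub_of_hasDerivAt_le hW hW'_nonpos ht]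
  choose k hk using fun j =>
    exists_tendsto_gain_of_adaptiveStorage_le hU_nonneg (hκ j) (ha j) hW_le
  obtain ⟨L, hL⟩ : ∃ L, Tendsto U atTop (𝓝 L) := by
    refine ⟨-w - ∑ j, (k j - C) ^ 2 / 2, (hw.neg.sub (tendsto_finsetSum _ fun j _ =>
      (((hk j).sub_const C).pow 2).div_const 2)).congr fun t => ?_⟩
    simp only [W, adaptiveStorage, Pi.neg_apply, neg_neg, add_sub_cancel_right]
  have hL_nonneg : 0 ≤ L := ge_of_tendsto hL ((eventually_ge_atTop t₀).mono hU_nonneg)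
  have hL_nonpos : α * L ≤ 0 :=
    nonpos_of_tendsto_of_hasDerivAt_le_neg hW hdissipation hW_nonneg (hL.const_mul α)
  rwa [le_antisymm (nonpos_of_mul_nonpos_right hL_nonpos hα) hL_nonneg] at hL

end AdaptiveGains

section SignFeedback

variable {m n : Type*} [Fintype m]

lemma mul_real_sign_eq_abs (a : ℝ) : a * Real.sign a = |a| := by
  rcases lt_trichotomy a 0 with ha | rfl | ha
  · rw [Real.sign_of_neg ha, abs_of_neg ha, mul_neg_one]
  · simp
  · rw [Real.sign_of_pos ha, abs_of_pos ha, mul_one]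

lemma hasDerivAt_half_dotProduct_self {e : ℝ → m → ℝ} {e' : m → ℝ} {t : ℝ}
    (he : HasDerivAt e e' t) : HasDerivAt (fun s => (e s ⬝ᵥ e s) / 2) (e t ⬝ᵥ e') t := by
  have hsum := HasDerivAt.fun_sum (u := Finset.univ) fun i _ =>
    (hasDerivAt_pi.1 he i).mul (hasDerivAt_pi.1 he i)
  refine (hsum.div_const 2).congr_deriv ?_
  rw [dotProduct, Finset.sum_div]
  exact Finset.sum_congr rfl fun i _ => by ring

lemma tendsto_zero_of_half_dotProduct_self {α : Type*} {l : Filter α} {e : α → m → ℝ}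
    (he : Tendsto (fun t => (e t ⬝ᵥ e t) / 2) l (𝓝 0)) : Tendsto e l (𝓝 0) := by
  have hsqrt : Tendsto (fun t => √(2 * ((e t ⬝ᵥ e t) / 2))) l (𝓝 0) := by
    simpa using (he.const_mul 2).sqrt
  refine tendsto_pi_nhds.2 fun i => squeeze_zero_norm (fun t => Real.abs_le_sqrt ?_) hsqrt
  rw [mul_div_cancel₀ _ two_ne_zero, sq]
  exact Finset.single_le_sum (f := fun i => e t i * e t i) (fun _ _ => mul_self_nonneg _)
    (Finset.mem_univ i)

variable [Fintype n] [DecidableEq n] (B : Matrix m n ℝ)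

lemma dotProduct_mulVec_diagonal_sign (e : m → ℝ) (k : n → ℝ) :
    e ⬝ᵥ (B *ᵥ (diagonal k *ᵥ fun j => Real.sign ((Bᵀ *ᵥ e) j))) =
      ∑ j, k j * |(Bᵀ *ᵥ e) j| := by
  rw [dotProduct_mulVec, ← mulVec_transpose]
  refine Finset.sum_congr rfl fun j _ => ?_
  rw [mulVec_diagonal, ← mul_real_sign_eq_abs]
  ring

theorem tendsto_zero_of_adaptive_sign_feedback {γ C t₀ : ℝ} (hγ : 0 < γ) {e c : ℝ → m → ℝ}
    {κ : n → ℝ → ℝ}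
    (he : ∀ t ≥ t₀, HasDerivAt e (-γ • e t + c t -
      B *ᵥ (diagonal (fun j => κ j t) *ᵥ fun j => Real.sign ((Bᵀ *ᵥ e t) j))) t)
    (hκ : ∀ j, ∀ t ≥ t₀, HasDerivAt (κ j) |(Bᵀ *ᵥ e t) j| t)
    (hc : ∀ t ≥ t₀, e t ⬝ᵥ c t ≤ C * ∑ j, |(Bᵀ *ᵥ e t) j|) :
    Tendsto e atTop (𝓝 0) := by
  refine tendsto_zero_of_half_dotProduct_self <| tendsto_zero_of_adaptive_dissipation (C := C)
    (mul_pos two_pos hγ) (fun t _ => ?_) (fun _ _ _ => abs_nonneg _)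
    (fun t ht => hasDerivAt_half_dotProduct_self (he t ht)) hκ fun t ht => ?_
  · exact div_nonneg (Finset.sum_nonneg fun _ _ => mul_self_nonneg _) zero_le_two
  calc e t ⬝ᵥ (-γ • e t + c t -
        B *ᵥ (diagonal (fun j => κ j t) *ᵥ fun j => Real.sign ((Bᵀ *ᵥ e t) j)))
      = -γ * (e t ⬝ᵥ e t) + e t ⬝ᵥ c t - ∑ j, κ j t * |(Bᵀ *ᵥ e t) j| := by
        rw [dotProduct_sub, dotProduct_add, dotProduct_smul, smul_eq_mul,
          dotProduct_mulVec_diagonal_sign]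
    _ ≤ -γ * (e t ⬝ᵥ e t) + C * ∑ j, |(Bᵀ *ᵥ e t) j| - ∑ j, κ j t * |(Bᵀ *ᵥ e t) j| := by
        gcongr
        exact hc t ht
    _ = -(2 * γ) * ((e t ⬝ᵥ e t) / 2) + ∑ j, (C - κ j t) * |(Bᵀ *ᵥ e t) j| := by
        simp only [sub_mul, Finset.sum_sub_distrib, Finset.mul_sum]
        ring

end SignFeedback

section Averaging

variable {V : Type*} [Fintype V]

/-- The averaging matrix `(1/n) 1ₙ1ₙᵀ`, which replaces a function on the agents by its mean. -/
noncomputable def averagingMatrix (V : Type*) [Fintype V] : Matrix V V ℝ :=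
  Matrix.of fun _ _ => 1 / Fintype.card V

lemma averagingMatrix_mulVec_apply (f : V → ℝ) (v : V) :
    (averagingMatrix V *ᵥ f) v = (∑ w, f w) / Fintype.card V := by
  simp only [averagingMatrix, mulVec, dotProduct, of_apply, ← Finset.mul_sum]
  ring

lemma two_mul_card_mul_dotProduct_sub_averagingMatrix_mulVec (f g : V → ℝ) :
    2 * Fintype.card V * (f ⬝ᵥ (g - averagingMatrix V *ᵥ g)) =
      ∑ v, ∑ w, (f v - f w) * (g v - g w) := by
  rcases isEmpty_or_nonempty V with _ | _
  · simp
  have hcard : (Fintype.card V : ℝ) ≠ 0 := Nat.cast_ne_zero.2 Fintype.card_ne_zero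
  have hleft : f ⬝ᵥ (g - averagingMatrix V *ᵥ g) =
      ∑ v, f v * g v - (∑ v, f v) * (∑ v, g v) / Fintype.card V := by
    simp only [dotProduct, Pi.sub_apply, averagingMatrix_mulVec_apply, mul_sub,
      Finset.sum_sub_distrib, ← Finset.sum_mul, mul_div_assoc]
  rw [hleft]
  simp only [mul_sub, sub_mul, Finset.sum_sub_distrib, Finset.sum_const, Finset.card_univ,
    nsmul_eq_mul]
  simp only [← Finset.sum_mul, ← Finset.mul_sum]
  field_simp
  ring

lemma kronecker_one_mulVec_apply {R l m ι : Type*} [NonAssocSemiring R] [Fintype m] [Fintype ι]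
    [DecidableEq ι] (A : Matrix l m R) (f : m × ι → R) (i : l) (k : ι) :
    ((A ⊗ₖ (1 : Matrix ι ι R)) *ᵥ f) (i, k) = (A *ᵥ fun j => f (j, k)) i := by
  simp [mulVec, dotProduct, Fintype.sum_prod_type, one_apply]

end Averaging

section ErrorDynamics

variable {m n : Type*} [Fintype n]

lemma norm_mulVec_smul_add_le [Fintype m] (A : Matrix m n ℝ) {f g : n → ℝ} {a b γ : ℝ}
    (hγ : 0 ≤ γ) (hf : ‖A *ᵥ f‖ ≤ a) (hg : ‖A *ᵥ g‖ ≤ b) :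
    ‖A *ᵥ (γ • f + g)‖ ≤ γ * a + b := by
  rw [mulVec_add, mulVec_smul]
  refine (norm_add_le _ _).trans ?_
  rw [norm_smul, Real.norm_of_nonneg hγ]
  gcongr

lemma hasDerivAt_mulVec [Finite m] (A : Matrix m n ℝ) {f : ℝ → n → ℝ} {f' : n → ℝ} {t : ℝ}
    (hf : HasDerivAt f f' t) : HasDerivAt (fun s => A *ᵥ f s) (A *ᵥ f') t := by
  cases nonempty_fintype m
  exact (mulVecLin A).toContinuousLinearMap.hasFDerivAt.comp_hasDerivAt t hf

lemma hasDerivAt_add_sub_mulVec_of_leaky {z φ : ℝ → n → ℝ} {φ' u : n → ℝ} {γ t : ℝ}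
    (J : Matrix n n ℝ) (hz : HasDerivAt z (-γ • z t - u) t) (hφ : HasDerivAt φ φ' t) :
    HasDerivAt (fun s => z s + φ s - J *ᵥ φ s)
      (-γ • (z t + φ t - J *ᵥ φ t) + (γ • φ t + φ' - J *ᵥ (γ • φ t + φ')) - u) t := by
  refine ((hz.add hφ).sub (hasDerivAt_mulVec J hφ)).congr_deriv ?_
  rw [mulVec_add, mulVec_smul]
  module

end ErrorDynamics

section Graph

variable {V : Type*} (G : SimpleGraph V)

lemma abs_sub_le_sum_darts {R : Type*} [AddCommGroup R] [LinearOrder R] [IsOrderedAddMonoid R]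
    (f : V → R) {v w : V} (p : G.Walk v w) :
    |f v - f w| ≤ (p.darts.map fun d => |f d.snd - f d.fst|).sum := by
  induction p with
  | nil => simp
  | @cons u v w h p ih =>
    rw [SimpleGraph.Walk.darts_cons, List.map_cons, List.sum_cons, abs_sub_comm (f v)]
    exact (abs_sub_le (f u) (f v) (f w)).trans (add_le_add_right ih _)

variable [Fintype V] [DecidableEq V] [DecidableRel G.Adj]

lemma transpose_dartIncidence_mulVec_apply (f : V → ℝ) (d : G.Dart) :
    ((dartIncidence G)ᵀ *ᵥ f) d = f d.snd - f d.fst := by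
  have hentry : ∀ v, dartIncidence G v d * f v =
      (if d.snd = v then f v else 0) - (if d.fst = v then f v else 0) := fun v => by
    have := d.adj.ne'
    simp only [dartIncidence, of_apply]
    grind
  simp only [mulVec, dotProduct, transpose_apply, hentry, Finset.sum_sub_distrib,
    Finset.sum_ite_eq, Finset.mem_univ, if_true]

variable {G}

lemma abs_sub_le_sum_abs_transpose_dartIncidence_mulVec (hG : G.Connected) (f : V → ℝ) (v w : V) :
    |f v - f w| ≤ ∑ d, |((dartIncidence G)ᵀ *ᵥ f) d| := by
  obtain ⟨p, hp⟩ := hG.exists_isPath v w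
  have hnodup : p.darts.Nodup :=
    SimpleGraph.Walk.darts_nodup_of_support_nodup hp.support_nodup
  simp only [transpose_dartIncidence_mulVec_apply]
  calc |f v - f w| ≤ (p.darts.map fun d => |f d.snd - f d.fst|).sum := abs_sub_le_sum_darts G f p
    _ = ∑ d ∈ p.darts.toFinset, |f d.snd - f d.fst| := (List.sum_toFinset _ hnodup).symm
    _ ≤ ∑ d : G.Dart, |f d.snd - f d.fst| :=
        Finset.sum_le_univ_sum_of_nonneg fun _ => abs_nonneg _

lemma dotProduct_sub_averagingMatrix_mulVec_le (hG : G.Connected) (f g : V → ℝ) :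
    f ⬝ᵥ (g - averagingMatrix V *ᵥ g) ≤ Fintype.card V / 2 *
      (∑ d, |((dartIncidence G)ᵀ *ᵥ f) d|) * ∑ d, |((dartIncidence G)ᵀ *ᵥ g) d| := by
  have := hG.nonempty
  have hcard : (0 : ℝ) < Fintype.card V := Nat.cast_pos.2 Fintype.card_pos
  set F := ∑ d, |((dartIncidence G)ᵀ *ᵥ f) d|
  set H := ∑ d, |((dartIncidence G)ᵀ *ᵥ g) d|
  have hpair : ∀ v w, (f v - f w) * (g v - g w) ≤ F * H := fun v w =>
    calc (f v - f w) * (g v - g w) ≤ |f v - f w| * |g v - g w| :=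
          (le_abs_self _).trans_eq (abs_mul _ _)
      _ ≤ F * H := by
          gcongr <;> exact abs_sub_le_sum_abs_transpose_dartIncidence_mulVec hG _ v w
  have hsum : ∑ v, ∑ w, (f v - f w) * (g v - g w) ≤ ∑ _v : V, ∑ _w : V, F * H :=
    Finset.sum_le_sum fun v _ => Finset.sum_le_sum fun w _ => hpair v w
  rw [← two_mul_card_mul_dotProduct_sub_averagingMatrix_mulVec] at hsum
  simp only [Finset.sum_const, Finset.card_univ, nsmul_eq_mul] at hsum
  refine le_of_mul_le_mul_left (hsum.trans_eq ?_) (mul_pos two_pos hcard)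
  ring

variable {ι : Type*} [Fintype ι] [DecidableEq ι]

lemma transpose_dartIncidence_mul_averagingMatrix :
    (dartIncidence G)ᵀ * averagingMatrix V = 0 := by
  ext d v
  exact (transpose_dartIncidence_mulVec_apply G (fun w => averagingMatrix V w v) d).trans
    (sub_self _)

lemma transpose_dartIncidence_kronecker_one_mulVec_sub_averagingMatrix (f g : V × ι → ℝ) :
    ((dartIncidence G)ᵀ ⊗ₖ (1 : Matrix ι ι ℝ)) *ᵥ
        (f - (averagingMatrix V ⊗ₖ (1 : Matrix ι ι ℝ)) *ᵥ g) =
      ((dartIncidence G)ᵀ ⊗ₖ (1 : Matrix ι ι ℝ)) *ᵥ f := by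
  rw [mulVec_sub, mulVec_mulVec, ← mul_kronecker_mul,
    transpose_dartIncidence_mul_averagingMatrix, zero_kronecker, zero_mulVec, sub_zero]

lemma dotProduct_sub_averagingMatrix_kronecker_one_mulVec_le (hG : G.Connected) {M : ℝ}
    (f g : V × ι → ℝ) (hg : ‖((dartIncidence G)ᵀ ⊗ₖ (1 : Matrix ι ι ℝ)) *ᵥ g‖ ≤ M) :
    f ⬝ᵥ (g - (averagingMatrix V ⊗ₖ (1 : Matrix ι ι ℝ)) *ᵥ g) ≤
      Fintype.card V / 2 * (Fintype.card G.Dart * M) *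
        ∑ j, |(((dartIncidence G)ᵀ ⊗ₖ (1 : Matrix ι ι ℝ)) *ᵥ f) j| := by
  have hgk : ∀ k, ∑ d, |((dartIncidence G)ᵀ *ᵥ fun v => g (v, k)) d| ≤ Fintype.card G.Dart * M :=
    fun k => by
      refine (Finset.sum_le_card_nsmul _ _ M fun d _ => ?_).trans_eq (nsmul_eq_mul _ _)
      rw [← kronecker_one_mulVec_apply]
      exact (norm_le_pi_norm _ (d, k)).trans hg
  calc f ⬝ᵥ (g - (averagingMatrix V ⊗ₖ (1 : Matrix ι ι ℝ)) *ᵥ g)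
      = ∑ k, (fun v => f (v, k)) ⬝ᵥ
          ((fun v => g (v, k)) - averagingMatrix V *ᵥ fun v => g (v, k)) := by
        simp only [dotProduct, Fintype.sum_prod_type_right, Pi.sub_apply,
          kronecker_one_mulVec_apply]
    _ ≤ ∑ k, Fintype.card V / 2 * (∑ d, |((dartIncidence G)ᵀ *ᵥ fun v => f (v, k)) d|) *
          (Fintype.card G.Dart * M) := by
        gcongr with k
        exact (dotProduct_sub_averagingMatrix_mulVec_le hG _ _).trans
          (mul_le_mul_of_nonneg_left (hgk k) (by positivity))
    _ = _ := by
        rw [← Finset.sum_mul, ← Finset.mul_sum, Fintype.sum_prod_type_right]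
        simp only [kronecker_one_mulVec_apply]
        ring

variable (G)

theorem robust_dac_asymptotic_convergence_general (hG : G.Connected) {γ t₀ : ℝ} (hγ : 0 < γ)
    {φ φ' z : ℝ → V × ι → ℝ} {κ : G.Dart × ι → ℝ → ℝ} {φbar dφbar : ℝ}
    (hφ : ∀ t ≥ t₀, HasDerivAt φ (φ' t) t)
    (hφbar : ∀ t ≥ t₀, ‖((dartIncidence G)ᵀ ⊗ₖ (1 : Matrix ι ι ℝ)) *ᵥ φ t‖ ≤ φbar)
    (hdφbar : ∀ t ≥ t₀, ‖((dartIncidence G)ᵀ ⊗ₖ (1 : Matrix ι ι ℝ)) *ᵥ φ' t‖ ≤ dφbar)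
    (hz : ∀ t ≥ t₀, HasDerivAt z
      (-γ • z t - (dartIncidence G ⊗ₖ (1 : Matrix ι ι ℝ)) *ᵥ (diagonal (fun j => κ j t) *ᵥ
        fun j => Real.sign ((((dartIncidence G)ᵀ ⊗ₖ (1 : Matrix ι ι ℝ)) *ᵥ (z t + φ t)) j))) t)
    (hκ : ∀ j, ∀ t ≥ t₀, HasDerivAt (κ j)
      |(((dartIncidence G)ᵀ ⊗ₖ (1 : Matrix ι ι ℝ)) *ᵥ (z t + φ t)) j| t) :
    Tendsto (fun t => z t + φ t - (averagingMatrix V ⊗ₖ (1 : Matrix ι ι ℝ)) *ᵥ φ t)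
      atTop (𝓝 0) := by
  have htranspose : (dartIncidence G ⊗ₖ (1 : Matrix ι ι ℝ))ᵀ =
      (dartIncidence G)ᵀ ⊗ₖ (1 : Matrix ι ι ℝ) := by
    rw [← kroneckerMap_transpose, transpose_one]
  set J := averagingMatrix V ⊗ₖ (1 : Matrix ι ι ℝ)
  have houtput : ∀ t, (dartIncidence G ⊗ₖ (1 : Matrix ι ι ℝ))ᵀ *ᵥ (z t + φ t - J *ᵥ φ t) =
      ((dartIncidence G)ᵀ ⊗ₖ (1 : Matrix ι ι ℝ)) *ᵥ (z t + φ t) := fun t => by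
    rw [htranspose, transpose_dartIncidence_kronecker_one_mulVec_sub_averagingMatrix]
  refine tendsto_zero_of_adaptive_sign_feedback (dartIncidence G ⊗ₖ (1 : Matrix ι ι ℝ)) (t₀ := t₀)
    (C := Fintype.card V / 2 * (Fintype.card G.Dart * (γ * φbar + dφbar)))
    (c := fun t => γ • φ t + φ' t - J *ᵥ (γ • φ t + φ' t)) (κ := κ) hγ
    (fun t ht => ?_) (fun j t ht => ?_) fun t ht => ?_
  · rw [houtput]
    exact hasDerivAt_add_sub_mulVec_of_leaky J (hz t ht) (hφ t ht)
  · rw [houtput]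
    exact hκ j t ht
  · rw [htranspose]
    exact dotProduct_sub_averagingMatrix_kronecker_one_mulVec_le hG _ _
      (norm_mulVec_smul_add_le _ hγ.le (hφbar t ht) (hdφbar t ht))

end Graph

/-- asymptotic convergence of the robust dynamic average consensus algorithm
`ż = -γ z - (B ⊗ I_r) K(t) sgn((Bᵀ ⊗ I_r) x)`, `x = z + φ`, with adaptive gains
`κ̇ⱼ = |yⱼ|`, `κⱼ(t₀) ≥ 1`: for every initial condition the error
`x̃(t) = x(t) - ((1/n) 1ₙ1ₙᵀ ⊗ I_r) φ(t)` tends to `0`.  (Norms on `ι → ℝ` are sup norms.) -/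
theorem robust_dac_asymptotic_convergence
    {V : Type*} [Fintype V] [DecidableEq V] (G : SimpleGraph V) [DecidableRel G.Adj]
    (hG : G.Connected) (hn : 2 ≤ Fintype.card V)
    (r : ℕ) (hr : 1 ≤ r) (γ : ℝ) (hγ : 0 < γ) (t₀ : ℝ)
    (φ φ' : ℝ → V × Fin r → ℝ) (hφ : ∀ t : ℝ, HasDerivAt φ (φ' t) t)
    (φbar dφbar : ℝ)
    (hφbar : ∀ t ≥ t₀,
      ‖((dartIncidence G)ᵀ ⊗ₖ (1 : Matrix (Fin r) (Fin r) ℝ)).mulVec (φ t)‖ ≤ φbar)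
    (hdφbar : ∀ t ≥ t₀,
      ‖((dartIncidence G)ᵀ ⊗ₖ (1 : Matrix (Fin r) (Fin r) ℝ)).mulVec (φ' t)‖ ≤ dφbar)
    (z : ℝ → V × Fin r → ℝ) (κ : G.Dart × Fin r → ℝ → ℝ)
    (x : ℝ → V × Fin r → ℝ) (hx : ∀ t : ℝ, x t = z t + φ t)
    (y : ℝ → G.Dart × Fin r → ℝ)
    (hy : ∀ t : ℝ, y t = ((dartIncidence G)ᵀ ⊗ₖ (1 : Matrix (Fin r) (Fin r) ℝ)).mulVec (x t))
    (hz : ∀ t ≥ t₀, HasDerivAt z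
      (-γ • z t - (dartIncidence G ⊗ₖ (1 : Matrix (Fin r) (Fin r) ℝ)).mulVec
        ((Matrix.diagonal fun j => κ j t).mulVec fun j => Real.sign (y t j))) t)
    (hκ : ∀ j, ∀ t ≥ t₀, HasDerivAt (κ j) |y t j| t)
    (hκ0 : ∀ j, 1 ≤ κ j t₀) :
    Filter.Tendsto (fun t => x t -
        ((Matrix.of fun _ _ : V => (1 : ℝ) / Fintype.card V)
          ⊗ₖ (1 : Matrix (Fin r) (Fin r) ℝ)).mulVec (φ t))
      Filter.atTop (nhds 0) := by
  obtain rfl : x = fun t => z t + φ t := funext hx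
  obtain rfl : y = _ := funext hy
  exact robust_dac_asymptotic_convergence_general G hG hγ (fun t _ => hφ t) hφbar hdφbar hz hκ
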